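/- arXiv:2003.07020 — 3 statements merged into one kernel-verified Lean document; each statement's English description precedes it below -/
import Mathlib

section
/- Let N_t ≥ 2 be an integer, let C be the N_t×N_t BDF2 all-at-once time-stepping matrix, and let Ĉ = C + (1/2)·e₁e₁ᵀ (so Ĉ is the lower triangular Toeplitz matrix with diagonal 3/2, first subdiagonal -2, second subdiagonal 1/2). Then Ĉ is invertible and the vector x ∈ ℝ^{N_t} with entries x_k = 1 − 3^{−k} for k = 1, …, N_t satisfies Ĉ x = e₁; equivalently, the first column of Ĉ⁻¹ has k-th entry 1 − 3^{−k}. -/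
/-!
Truncating multiplication by a power series `f` at order `X ^ n` is a ring homomorphism from
`R⟦X⟧` to lower triangular Toeplitz matrices. The matrix `Ĉ` is the image of
`3/2 - 2 X + X²/2 = (3/2) (1 - X) (1 - X/3)`, whose inverse is, by partial fractions,
`∑ (1 - 3^{-(k+1)}) X^k`. This inverse gives both the invertibility of `Ĉ` and the first column
of its inverse.
-/

open Matrix Finset

/-- The `N_t × N_t` BDF2 all-at-once time-stepping matrix `C` (0-based indices). -/
noncomputable def bdf2C (Nt : ℕ) : Matrix (Fin Nt) (Fin Nt) ℝ :=
  Matrix.of fun i j =>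
    if (i : ℕ) = (j : ℕ) then (if (i : ℕ) = 0 then 1 else 3 / 2)
    else if (i : ℕ) = (j : ℕ) + 1 then -2
    else if (i : ℕ) = (j : ℕ) + 2 then 1 / 2
    else 0

/-- The first standard basis vector `e₁` of `ℝ^{N_t}`. -/
noncomputable def e1 (Nt : ℕ) : Fin Nt → ℝ := fun i => if (i : ℕ) = 0 then 1 else 0

/-- `Ĉ = C + (1/2)·e₁e₁ᵀ`, the lower triangular Toeplitz matrix with diagonal `3/2`,
first subdiagonal `-2` and second subdiagonal `1/2`. -/
noncomputable def bdf2Chat (Nt : ℕ) : Matrix (Fin Nt) (Fin Nt) ℝ :=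
  bdf2C Nt + (1 / 2 : ℝ) • Matrix.vecMulVec (e1 Nt) (e1 Nt)

section LowerToeplitz

open PowerSeries

variable {R : Type*} [Semiring R] {n : ℕ}

theorem coeff_mul_eq_sum_fin (f g : R⟦X⟧) (i : Fin n) :
    coeff i (f * g) = ∑ j : Fin n, coeff i (f * X ^ (j : ℕ)) * coeff j g := by
  have range_filter : {j ∈ range n | j ≤ (i : ℕ)} = range (i + 1) := by grind
  rw [Fin.sum_univ_eq_sum_range (fun j => coeff i (f * X ^ j) * coeff j g) n]
  simp only [coeff_mul_X_pow', ite_mul, zero_mul]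
  rw [← sum_filter, range_filter, coeff_mul, ← Nat.sum_antidiagonal_swap,
    Nat.sum_antidiagonal_eq_sum_range_succ_mk]
  rfl

/-- The `n × n` lower triangular Toeplitz matrix with first column the coefficients of a power
series `f`, bundled as a ring homomorphism in `f`. Column `j` is encoded as the coefficients of
`f * X ^ j`, which avoids a case distinction on the position relative to the diagonal. -/
noncomputable def lowerToeplitz (n : ℕ) : R⟦X⟧ →+* Matrix (Fin n) (Fin n) R where
  toFun f := Matrix.of fun i j => coeff i (f * X ^ (j : ℕ))
  map_one' := by
    ext i j
    simp only [Matrix.of_apply, one_mul, coeff_X_pow, Matrix.one_apply, Fin.ext_iff]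
  map_mul' f g := by
    ext i j
    simp only [Matrix.of_apply, Matrix.mul_apply, mul_assoc f, coeff_mul_eq_sum_fin f (g * _)]
  map_zero' := by
    ext
    simp
  map_add' f g := by
    ext
    simp [add_mul]

theorem lowerToeplitz_apply (f : R⟦X⟧) (i j : Fin n) :
    lowerToeplitz n f i j = if (j : ℕ) ≤ i then coeff (i - j) f else 0 :=
  coeff_mul_X_pow' f j i

theorem lowerToeplitz_mulVec_coeff (f g : R⟦X⟧) :
    (lowerToeplitz n f *ᵥ fun i : Fin n => coeff i g) = fun i : Fin n => coeff i (f * g) :=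
  funext fun i => (coeff_mul_eq_sum_fin f g i).symm

end LowerToeplitz

section GeometricSeries

open PowerSeries

variable {R : Type*} [CommRing R]

theorem one_sub_C_mul_X_mul_mk_pow (a : R) :
    (1 - C a * X) * PowerSeries.mk (fun k => a ^ k) = 1 := by
  simpa [rescale_X, rescale_mk, mul_comm] using
    congrArg (rescale a) (mk_one_mul_one_sub_eq_one R)

theorem one_sub_C_mul_X_mul_one_sub_C_mul_X_mul_mk (a b : R) :
    (1 - C a * X) * (1 - C b * X) * PowerSeries.mk (fun k => a ^ (k + 1) - b ^ (k + 1)) =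
      C (a - b) := by
  have partial_fractions : PowerSeries.mk (fun k => a ^ (k + 1) - b ^ (k + 1)) =
      C a * PowerSeries.mk (fun k => a ^ k) - C b * PowerSeries.mk (fun k => b ^ k) := by
    ext k
    simp [pow_succ']
  rw [partial_fractions, map_sub]
  linear_combination C a * (1 - C b * X) * one_sub_C_mul_X_mul_mk_pow a -
    C b * (1 - C a * X) * one_sub_C_mul_X_mul_mk_pow b

end GeometricSeries

section BDF2

open PowerSeries

/-- The generating polynomial `3/2 - 2 X + X²/2` of the BDF2 scheme, as a power series: its
coefficients are the entries of the first column of `Ĉ`. -/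
noncomputable def bdf2Symbol : ℝ⟦X⟧ :=
  C (3 / 2) - C 2 * X + C (1 / 2) * X ^ 2

theorem bdf2Symbol_eq_mul : bdf2Symbol = C (3 / 2) * ((1 - X) * (1 - C (1 / 3) * X)) := by
  have linear_coeff : (C 2 : ℝ⟦X⟧) = C (3 / 2) * (1 + C (1 / 3)) := by
    rw [← map_one C, ← map_add, ← map_mul]
    norm_num
  have quadratic_coeff : (C (1 / 2) : ℝ⟦X⟧) = C (3 / 2) * C (1 / 3) := by
    rw [← map_mul]
    norm_num
  rw [bdf2Symbol, linear_coeff, quadratic_coeff]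
  ring

theorem bdf2Symbol_mul_mk :
    bdf2Symbol * PowerSeries.mk (fun k => 1 - (1 / 3 : ℝ) ^ (k + 1)) = 1 := by
  have inverse_of_factors := one_sub_C_mul_X_mul_one_sub_C_mul_X_mul_mk (1 : ℝ) (1 / 3)
  simp only [one_pow, map_one, one_mul] at inverse_of_factors
  rw [bdf2Symbol_eq_mul, mul_assoc, inverse_of_factors, ← map_mul]
  norm_num

theorem bdf2Chat_eq_lowerToeplitz (n : ℕ) : bdf2Chat n = lowerToeplitz n bdf2Symbol := by
  ext i j
  simp only [bdf2Chat, bdf2C, e1, lowerToeplitz_apply, bdf2Symbol, Matrix.add_apply,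
    Matrix.smul_apply, vecMulVec_apply, Matrix.of_apply, smul_eq_mul, map_add, map_sub,
    coeff_C, coeff_C_mul, coeff_X, coeff_X_pow]
  split_ifs <;> first | omega | norm_num

theorem e1_eq_coeff_one (n : ℕ) : e1 n = fun i : Fin n => coeff i (1 : ℝ⟦X⟧) :=
  funext fun i => (coeff_one (i : ℕ)).symm

end BDF2

/-- `Ĉ` is invertible, and the vector `x` with `x_k = 1 − 3^{−k}` (`k = 1, …, N_t`, here
`x i = 1 − 3^{−(i+1)}` with 0-based `i`) satisfies `Ĉ x = e₁`; i.e. the first column of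
`Ĉ⁻¹` has `k`-th entry `1 − 3^{−k}`. -/
theorem stmt3 (Nt : ℕ) (hNt : 2 ≤ Nt) :
    IsUnit (bdf2Chat Nt) ∧
      (bdf2Chat Nt) *ᵥ (fun i : Fin Nt => 1 - (1 / 3 : ℝ) ^ ((i : ℕ) + 1)) = e1 Nt := by
  rw [bdf2Chat_eq_lowerToeplitz]
  constructor
  · exact (IsUnit.of_mul_eq_one _ bdf2Symbol_mul_mk).map (lowerToeplitz Nt)
  · rw [e1_eq_coeff_one, ← bdf2Symbol_mul_mk, ← lowerToeplitz_mulVec_coeff]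
    simp only [PowerSeries.coeff_mk]
end

section
/- Let N_t ≥ 3 and N_s ≥ 1 be integers, let C be the N_t×N_t BDF2 all-at-once time-stepping matrix, let A be a real symmetric negative semidefinite N_s×N_s matrix, let τ > 0, set T = N_t·τ, and set 𝒜 = C ⊗ I_{N_s} − τ·(I_{N_t} ⊗ A). Then the singular values of 𝒜 satisfy σ_max(𝒜) ≤ 4 + τ‖A‖₂ and σ_min(𝒜) ≥ √6/(3 N_t), and consequently the spectral condition number satisfies cond₂(𝒜) = σ_max(𝒜)/σ_min(𝒜) ≤ 2√6·N_t + (√6/2)·T·‖A‖₂. -/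
open Matrix Finset Kronecker

/-- The Euclidean (`ℓ²`) norm of a vector. -/
noncomputable def l2norm {n : Type*} [Fintype n] (x : n → ℝ) : ℝ :=
  Real.sqrt (∑ i, x i ^ 2)

/-- The largest singular value (spectral norm) of a square real matrix. -/
noncomputable def sigmaMax {n : Type*} [Fintype n] (M : Matrix n n ℝ) : ℝ :=
  sSup {c | ∃ x : n → ℝ, l2norm x = 1 ∧ c = l2norm (M *ᵥ x)}

/-- The smallest singular value of a square real matrix. -/
noncomputable def sigmaMin {n : Type*} [Fintype n] (M : Matrix n n ℝ) : ℝ :=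
  sInf {c | ∃ x : n → ℝ, l2norm x = 1 ∧ c = l2norm (M *ᵥ x)}

/-! Multiplying the first row of `C` by `3 / 2` makes it the Toeplitz matrix of the BDF2
difference of sequences preceded by two zeros, at the price of a factor at most `3 / 2` in the
norm of the image. For the Toeplitz matrix, Dahlquist's G-stability of BDF2 says that the
differences pair nonnegatively with the dissipative term `-τ A`, so adding that term only
increases the norm and it suffices to bound a sequence by its BDF2 differences. This last bound
holds because the convolution inverse of the BDF2 stencil has entries in `[0, 1]`, the leading one
being `2 / 3`. The upper bound is the triangle inequality, the absolute values of the stencil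
`3 / 2, -2, 1 / 2` adding up to `4`. -/

lemma exists_seq_zero_zero_extending {E : Type*} [Zero E] {N : ℕ} (x : Fin N → E) :
    ∃ v : ℕ → E, v 0 = 0 ∧ v 1 = 0 ∧ ∀ k : Fin N, v (k + 2) = x k :=
  ⟨fun n => if h : 2 ≤ n ∧ n - 2 < N then x ⟨n - 2, h.2⟩ else 0, by simp, by simp, by simp⟩

lemma sum_range_le_sum_range_succ_of_zero {u : ℕ → ℝ} {n : ℕ} (h0 : u 0 = 0) (hn : 0 ≤ u n) :
    ∑ k ∈ range n, u k ≤ ∑ k ∈ range n, u (k + 1) := by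
  have := (sum_range_succ' u n).symm.trans (sum_range_succ u n)
  linarith

lemma sum_ite_val_eq_add {E : Type*} [AddCommMonoid E] {N : ℕ} (k : Fin N) (s : ℕ) {w : E}
    (hw : (k : ℕ) < s → w = 0) : ∑ j : Fin N, (if (k : ℕ) = j + s then w else 0) = w := by
  rcases lt_or_ge (k : ℕ) s with hks | hsk
  · simp [hw hks]
  · rw [sum_eq_single (⟨k - s, by omega⟩ : Fin N)]
    · exact if_pos (by simp [hsk])
    · exact fun j _ hj => if_neg fun h => hj (Fin.ext (by simp [h]))
    · simp

section NormedSpace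

variable {E : Type*} [NormedAddCommGroup E] [NormedSpace ℝ E] {v : ℕ → E}

/-- The BDF2 difference stencil (with unit step size) applied to a sequence. The index is that of
the oldest of the three terms, so that no subtraction on `ℕ` occurs. -/
noncomputable def bdf2Diff (v : ℕ → E) (k : ℕ) : E :=
  (3 / 2 : ℝ) • v (k + 2) - (2 : ℝ) • v (k + 1) + (1 / 2 : ℝ) • v k

lemma sum_range_bdf2Diff (h0 : v 0 = 0) (h1 : v 1 = 0) (n : ℕ) :
    ∑ k ∈ range n, bdf2Diff v k = (3 / 2 : ℝ) • v (n + 1) - (1 / 2 : ℝ) • v n := by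
  induction n with
  | zero => simp [h0, h1]
  | succ n ih => rw [sum_range_succ, ih, bdf2Diff]; module

lemma norm_le_sum_norm_bdf2Diff (h0 : v 0 = 0) (h1 : v 1 = 0) (n : ℕ) :
    ‖v (n + 2)‖ ≤ ∑ k ∈ range n, ‖bdf2Diff v k‖ + 2 / 3 * ‖bdf2Diff v n‖ := by
  have step (m : ℕ) :
      ‖v (m + 2)‖ ≤ 2 / 3 * ∑ k ∈ range (m + 1), ‖bdf2Diff v k‖ + 1 / 3 * ‖v (m + 1)‖ := by
    have hv : v (m + 2) =
        (2 / 3 : ℝ) • ∑ k ∈ range (m + 1), bdf2Diff v k + (1 / 3 : ℝ) • v (m + 1) := by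
      rw [sum_range_bdf2Diff h0 h1]; module
    calc ‖v (m + 2)‖
        ≤ 2 / 3 * ‖∑ k ∈ range (m + 1), bdf2Diff v k‖ + 1 / 3 * ‖v (m + 1)‖ := by
          rw [hv]
          refine (norm_add_le _ _).trans_eq ?_
          simp only [norm_smul, Real.norm_eq_abs, abs_of_pos (by norm_num : (0 : ℝ) < 2 / 3),
            abs_of_pos (by norm_num : (0 : ℝ) < 1 / 3)]
      _ ≤ _ := by gcongr; exact norm_sum_le _ _
  have bound (m : ℕ) : ‖v (m + 1)‖ ≤ ∑ k ∈ range m, ‖bdf2Diff v k‖ := by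
    induction m with
    | zero => simp [h1]
    | succ m ih =>
      have := step m
      rw [sum_range_succ] at this ⊢
      linarith [norm_nonneg (bdf2Diff v m)]
  have := step n
  rw [sum_range_succ] at this
  linarith [bound n]

lemma sq_norm_le_mul_sum_sq_norm_bdf2Diff (h0 : v 0 = 0) (h1 : v 1 = 0) (n : ℕ) :
    ‖v (n + 2)‖ ^ 2 ≤ (n + 1 / 2 : ℝ) * ∑ k ∈ range (n + 1), ‖bdf2Diff v k‖ ^ 2 := by
  have hnorm := norm_le_sum_norm_bdf2Diff h0 h1 n
  have hcs : (∑ k ∈ range n, ‖bdf2Diff v k‖) ^ 2 ≤ n * ∑ k ∈ range n, ‖bdf2Diff v k‖ ^ 2 := by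
    simpa only [card_range] using
      sq_sum_le_card_mul_sum_sq (s := range n) (f := fun k => ‖bdf2Diff v k‖)
  rw [sum_range_succ]
  set s := ∑ k ∈ range n, ‖bdf2Diff v k‖
  set q := ∑ k ∈ range n, ‖bdf2Diff v k‖ ^ 2
  set a := ‖bdf2Diff v n‖
  have hq : 0 ≤ q := sum_nonneg fun _ _ => sq_nonneg _
  have amgm : 4 / 3 * (s * a) ≤ n * a ^ 2 + 4 / 9 * q := by
    refine le_of_sq_le_sq ?_ (by positivity)
    nlinarith [mul_le_mul_of_nonneg_right hcs (sq_nonneg a), sq_nonneg (n * a ^ 2 - 4 / 9 * q)]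
  calc ‖v (n + 2)‖ ^ 2 ≤ (s + 2 / 3 * a) ^ 2 := by gcongr
    _ ≤ (n + 1 / 2) * (q + a ^ 2) := by nlinarith [sq_nonneg a]

lemma sum_sq_norm_le_mul_sum_sq_norm_bdf2Diff (h0 : v 0 = 0) (h1 : v 1 = 0) (N : ℕ) :
    ∑ k ∈ range N, ‖v (k + 2)‖ ^ 2 ≤ (N ^ 2 / 2 : ℝ) * ∑ k ∈ range N, ‖bdf2Diff v k‖ ^ 2 := by
  induction N with
  | zero => simp
  | succ n ih =>
    have hlast := sq_norm_le_mul_sum_sq_norm_bdf2Diff h0 h1 n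
    have hmono : (n ^ 2 / 2 : ℝ) * ∑ k ∈ range n, ‖bdf2Diff v k‖ ^ 2 ≤
        (n ^ 2 / 2 : ℝ) * ∑ k ∈ range (n + 1), ‖bdf2Diff v k‖ ^ 2 := by
      gcongr; omega
    rw [sum_range_succ (fun k => ‖v (k + 2)‖ ^ 2)]
    push_cast
    linarith

lemma sq_norm_bdf2Diff_le (v : ℕ → E) (k : ℕ) :
    ‖bdf2Diff v k‖ ^ 2 ≤ 6 * ‖v (k + 2)‖ ^ 2 + 8 * ‖v (k + 1)‖ ^ 2 + 2 * ‖v k‖ ^ 2 := by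
  have htri : ‖bdf2Diff v k‖ ≤ 3 / 2 * ‖v (k + 2)‖ + 2 * ‖v (k + 1)‖ + 1 / 2 * ‖v k‖ := by
    refine (norm_add_le_of_le (norm_sub_le _ _) le_rfl).trans_eq ?_
    simp only [norm_smul]
    norm_num
  refine (pow_le_pow_left₀ (norm_nonneg _) htri 2).trans ?_
  nlinarith [sq_nonneg (‖v (k + 2)‖ - ‖v (k + 1)‖), sq_nonneg (‖v (k + 2)‖ - ‖v k‖),
    sq_nonneg (‖v (k + 1)‖ - ‖v k‖)]

lemma sum_sq_norm_bdf2Diff_le (h0 : v 0 = 0) (h1 : v 1 = 0) (N : ℕ) :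
    ∑ k ∈ range N, ‖bdf2Diff v k‖ ^ 2 ≤ 16 * ∑ k ∈ range N, ‖v (k + 2)‖ ^ 2 := by
  have hshift₁ := sum_range_le_sum_range_succ_of_zero (u := fun k => ‖v (k + 1)‖ ^ 2)
    (n := N) (by simp [h1]) (sq_nonneg _)
  have hshift₀ := sum_range_le_sum_range_succ_of_zero (u := fun k => ‖v k‖ ^ 2)
    (n := N) (by simp [h0]) (sq_nonneg _)
  have hstencil := sum_le_sum fun k (_ : k ∈ range N) => sq_norm_bdf2Diff_le v k
  simp only [sum_add_distrib, ← mul_sum] at hstencil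
  linarith

/-- The diagonal of `diag(3 / 2, 1, …, 1)`, the row scaling under which `bdf2C` becomes the Toeplitz
matrix of `bdf2Diff`. -/
noncomputable def bdf2RowScale (k : ℕ) : ℝ := if k = 0 then 3 / 2 else 1

lemma one_le_bdf2RowScale (k : ℕ) : 1 ≤ bdf2RowScale k := by
  unfold bdf2RowScale; split_ifs <;> norm_num

lemma bdf2RowScale_le (k : ℕ) : bdf2RowScale k ≤ 3 / 2 := by
  unfold bdf2RowScale; split_ifs <;> norm_num

lemma sum_bdf2C_smul (h0 : v 0 = 0) (h1 : v 1 = 0) {N : ℕ} (k : Fin N) :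
    ∑ j, bdf2C N k j • v (j + 2) =
      (if (k : ℕ) = 0 then 1 else 3 / 2 : ℝ) • v (k + 2) + (-2 : ℝ) • v (k + 1) +
        (1 / 2 : ℝ) • v k := by
  have hentry (j : Fin N) : bdf2C N k j • v (j + 2) =
      (if (k : ℕ) = j + 0 then (if (k : ℕ) = 0 then 1 else 3 / 2 : ℝ) • v (k + 2) else 0) +
      (if (k : ℕ) = j + 1 then (-2 : ℝ) • v (k + 1) else 0) +
      (if (k : ℕ) = j + 2 then (1 / 2 : ℝ) • v k else 0) := by
    simp only [bdf2C, Matrix.of_apply]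
    split_ifs <;> first | omega | simp [*]
  have hlag₁ (hk : (k : ℕ) < 1) : (-2 : ℝ) • v (k + 1) = 0 := by
    simp [Nat.lt_one_iff.mp hk, h1]
  have hlag₂ (hk : (k : ℕ) < 2) : (1 / 2 : ℝ) • v k = 0 := by
    rcases Nat.le_one_iff_eq_zero_or_eq_one.mp (Nat.lt_succ_iff.mp hk) with hk | hk <;>
      simp [hk, h0, h1]
  simp only [hentry, sum_add_distrib]
  rw [sum_ite_val_eq_add k 0 (by simp), sum_ite_val_eq_add k 1 hlag₁, sum_ite_val_eq_add k 2 hlag₂]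

lemma bdf2RowScale_smul_sum_bdf2C (h0 : v 0 = 0) (h1 : v 1 = 0) {N : ℕ} (k : Fin N) :
    bdf2RowScale k • ∑ j, bdf2C N k j • v (j + 2) = bdf2Diff v k := by
  rw [sum_bdf2C_smul h0 h1]
  by_cases hk : (k : ℕ) = 0
  · simp [bdf2RowScale, bdf2Diff, hk, h0, h1]
  · rw [bdf2RowScale, bdf2Diff, if_neg hk, if_neg hk]
    module

lemma sum_sq_norm_sum_bdf2C_smul_le {N : ℕ} (x : Fin N → E) :
    ∑ k, ‖∑ j, bdf2C N k j • x j‖ ^ 2 ≤ 16 * ∑ k, ‖x k‖ ^ 2 := by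
  obtain ⟨v, h0, h1, hv⟩ := exists_seq_zero_zero_extending x
  simp only [← hv]
  have hrow (k : Fin N) : ‖∑ j, bdf2C N k j • v (j + 2)‖ ≤ ‖bdf2Diff v k‖ := by
    have hscale := one_le_bdf2RowScale k
    rw [← bdf2RowScale_smul_sum_bdf2C h0 h1, norm_smul, Real.norm_of_nonneg (by linarith)]
    exact le_mul_of_one_le_left (norm_nonneg _) hscale
  calc ∑ k : Fin N, ‖∑ j, bdf2C N k j • v (j + 2)‖ ^ 2
      ≤ ∑ k : Fin N, ‖bdf2Diff v k‖ ^ 2 := by gcongr with k; exact hrow k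
    _ ≤ 16 * ∑ k : Fin N, ‖v (k + 2)‖ ^ 2 := by
      rw [Fin.sum_univ_eq_sum_range (fun k => ‖bdf2Diff v k‖ ^ 2),
        Fin.sum_univ_eq_sum_range (fun k => ‖v (k + 2)‖ ^ 2)]
      exact sum_sq_norm_bdf2Diff_le h0 h1 N

end NormedSpace

section InnerProductSpace

variable {E : Type*} [NormedAddCommGroup E] [InnerProductSpace ℝ E] {S : E →ₗ[ℝ] E}

lemma sum_sq_norm_le_of_sum_inner_nonneg {ι : Type*} {s : Finset ι} {a b : ι → E}
    (h : 0 ≤ ∑ k ∈ s, inner ℝ (a k) (b k)) :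
    ∑ k ∈ s, ‖a k‖ ^ 2 ≤ ∑ k ∈ s, ‖a k + b k‖ ^ 2 := by
  have hb : 0 ≤ ∑ k ∈ s, ‖b k‖ ^ 2 := sum_nonneg fun _ _ => sq_nonneg _
  simp only [norm_add_sq_real, sum_add_distrib, ← mul_sum]
  linarith

/-- Dahlquist's G-energy of the BDF2 method at two consecutive values, the newer one first, in the
semi-inner product `⟪·, S ·⟫`. -/
noncomputable def bdf2Energy (S : E →ₗ[ℝ] E) (b a : E) : ℝ :=
  (inner ℝ b (S b) + inner ℝ ((2 : ℝ) • b - a) (S ((2 : ℝ) • b - a))) / 4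

lemma bdf2Energy_nonneg (hS : S.IsPositive) (b a : E) : 0 ≤ bdf2Energy S b a := by
  have := hS.inner_nonneg_right b
  have := hS.inner_nonneg_right ((2 : ℝ) • b - a)
  unfold bdf2Energy
  positivity

lemma bdf2Energy_sub_le_inner_bdf2Diff (hS : S.IsPositive) (v : ℕ → E) (k : ℕ) :
    bdf2Energy S (v (k + 2)) (v (k + 1)) - bdf2Energy S (v (k + 1)) (v k) ≤
      inner ℝ (bdf2Diff v k) (S (v (k + 2))) := by
  have hdefect := hS.inner_nonneg_right (v (k + 2) - (2 : ℝ) • v (k + 1) + v k)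
  have hsymm (a b : E) : inner ℝ a (S b) = inner ℝ b (S a) := by
    rw [← hS.isSymmetric, real_inner_comm]
  simp only [bdf2Energy, bdf2Diff, map_sub, map_add, map_smul, inner_sub_left, inner_sub_right,
    inner_add_left, inner_add_right, real_inner_smul_left, real_inner_smul_right] at hdefect ⊢
  linarith [hsymm (v k) (v (k + 1)), hsymm (v k) (v (k + 2)), hsymm (v (k + 1)) (v (k + 2))]

variable {v : ℕ → E}

lemma sum_inner_bdf2Diff_nonneg (hS : S.IsPositive) (h0 : v 0 = 0) (h1 : v 1 = 0) (N : ℕ) :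
    0 ≤ ∑ k ∈ range N, inner ℝ (bdf2Diff v k) (S (v (k + 2))) :=
  calc 0 ≤ bdf2Energy S (v (N + 1)) (v N) - bdf2Energy S (v 1) (v 0) := by
        simpa [h0, h1, bdf2Energy] using bdf2Energy_nonneg hS (v (N + 1)) (v N)
    _ = ∑ k ∈ range N,
        (bdf2Energy S (v (k + 2)) (v (k + 1)) - bdf2Energy S (v (k + 1)) (v k)) :=
      (sum_range_sub (fun k => bdf2Energy S (v (k + 1)) (v k)) N).symm
    _ ≤ _ := sum_le_sum fun k _ => bdf2Energy_sub_le_inner_bdf2Diff hS v k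

lemma sum_bdf2RowScale_mul_inner_nonneg (hS : S.IsPositive) (h0 : v 0 = 0) (h1 : v 1 = 0) (N : ℕ) :
    0 ≤ ∑ k ∈ range N, bdf2RowScale k * inner ℝ (bdf2Diff v k) (S (v (k + 2))) := by
  refine (sum_inner_bdf2Diff_nonneg hS h0 h1 N).trans (sum_le_sum fun k _ => ?_)
  rcases k with _ | k
  · have hfirst : 0 ≤ inner ℝ (bdf2Diff v 0) (S (v 2)) := by
      simpa [bdf2Diff, h0, h1, real_inner_smul_left] using hS.inner_nonneg_right (v 2)
    exact le_mul_of_one_le_left hfirst (one_le_bdf2RowScale 0)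
  · simp [bdf2RowScale]

lemma sum_sq_norm_bdf2Diff_le_add (hS : S.IsPositive) (h0 : v 0 = 0) (h1 : v 1 = 0) (N : ℕ) :
    ∑ k ∈ range N, ‖bdf2Diff v k‖ ^ 2 ≤
      ∑ k ∈ range N, ‖bdf2Diff v k + bdf2RowScale k • S (v (k + 2))‖ ^ 2 := by
  refine sum_sq_norm_le_of_sum_inner_nonneg ?_
  simpa only [real_inner_smul_right] using sum_bdf2RowScale_mul_inner_nonneg hS h0 h1 N

lemma sum_sq_norm_le_sum_sq_norm_bdf2C_add (hS : S.IsPositive) {N : ℕ} (x : Fin N → E) :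
    ∑ k, ‖x k‖ ^ 2 ≤
      9 / 8 * (N : ℝ) ^ 2 * ∑ k, ‖(∑ j, bdf2C N k j • x j) + S (x k)‖ ^ 2 := by
  obtain ⟨v, h0, h1, hv⟩ := exists_seq_zero_zero_extending x
  simp only [← hv]
  have hrow (k : Fin N) : ‖bdf2Diff v k + bdf2RowScale k • S (v (k + 2))‖ ^ 2 ≤
      9 / 4 * ‖(∑ j, bdf2C N k j • v (j + 2)) + S (v (k + 2))‖ ^ 2 := by
    have hscale : bdf2RowScale k ^ 2 ≤ 9 / 4 := by
      nlinarith [one_le_bdf2RowScale k, bdf2RowScale_le k]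
    rw [← bdf2RowScale_smul_sum_bdf2C h0 h1, ← smul_add, norm_smul, mul_pow, Real.norm_eq_abs,
      sq_abs]
    gcongr
  calc ∑ k : Fin N, ‖v (k + 2)‖ ^ 2
      ≤ (N ^ 2 / 2 : ℝ) * ∑ k : Fin N, ‖bdf2Diff v k + bdf2RowScale k • S (v (k + 2))‖ ^ 2 := by
        rw [Fin.sum_univ_eq_sum_range (fun k => ‖v (k + 2)‖ ^ 2), Fin.sum_univ_eq_sum_range
          (fun k => ‖bdf2Diff v k + bdf2RowScale k • S (v (k + 2))‖ ^ 2)]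
        refine (sum_sq_norm_le_mul_sum_sq_norm_bdf2Diff h0 h1 N).trans ?_
        exact mul_le_mul_of_nonneg_left (sum_sq_norm_bdf2Diff_le_add hS h0 h1 N) (by positivity)
    _ ≤ (N ^ 2 / 2 : ℝ) *
        ∑ k : Fin N, 9 / 4 * ‖(∑ j, bdf2C N k j • v (j + 2)) + S (v (k + 2))‖ ^ 2 := by
      gcongr with k; exact hrow k
    _ = _ := by rw [← mul_sum]; ring

end InnerProductSpace

section SingularValues

variable {n : Type*} [Fintype n]

lemma l2norm_eq_norm_toLp (x : n → ℝ) : l2norm x = ‖WithLp.toLp 2 x‖ := by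
  simp [l2norm, EuclideanSpace.norm_eq]

lemma l2norm_nonneg (x : n → ℝ) : 0 ≤ l2norm x := Real.sqrt_nonneg _

lemma sigmaMax_eq_norm_toEuclideanCLM [DecidableEq n] (M : Matrix n n ℝ) :
    sigmaMax M = ‖Matrix.toEuclideanCLM (n := n) (𝕜 := ℝ) M‖ := by
  rw [← ContinuousLinearMap.sSup_sphere_eq_norm, sigmaMax]
  congr 1
  ext c
  simp only [(WithLp.equiv 2 (n → ℝ)).symm.surjective.exists, Set.mem_ofPred_eq, Set.mem_image,
    mem_sphere_zero_iff_norm, WithLp.equiv_symm_apply, Matrix.toEuclideanCLM_toLp,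
    l2norm_eq_norm_toLp, eq_comm]

lemma sigmaMax_nonneg (M : Matrix n n ℝ) : 0 ≤ sigmaMax M := by
  classical
  rw [sigmaMax_eq_norm_toEuclideanCLM]
  exact norm_nonneg _

lemma l2norm_mulVec_le (M : Matrix n n ℝ) (x : n → ℝ) :
    l2norm (M *ᵥ x) ≤ sigmaMax M * l2norm x := by
  classical
  rw [sigmaMax_eq_norm_toEuclideanCLM, l2norm_eq_norm_toLp, l2norm_eq_norm_toLp,
    ← Matrix.toEuclideanCLM_toLp]
  exact ContinuousLinearMap.le_opNorm _ _

lemma sigmaMax_le {M : Matrix n n ℝ} {c : ℝ} (hc : 0 ≤ c)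
    (h : ∀ x, l2norm (M *ᵥ x) ≤ c * l2norm x) : sigmaMax M ≤ c := by
  refine Real.sSup_le ?_ hc
  rintro _ ⟨x, hx, rfl⟩
  simpa only [hx, mul_one] using h x

lemma le_sigmaMin [Nonempty n] {M : Matrix n n ℝ} {c : ℝ}
    (h : ∀ x, c * l2norm x ≤ l2norm (M *ᵥ x)) : c ≤ sigmaMin M := by
  classical
  obtain ⟨i⟩ := ‹Nonempty n›
  refine le_csInf ⟨_, Pi.single i 1, by simp [l2norm_eq_norm_toLp], rfl⟩ ?_
  rintro _ ⟨x, hx, rfl⟩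
  simpa only [hx, mul_one] using h x

lemma sigmaMax_sub_smul_le (M M' : Matrix n n ℝ) {τ : ℝ} (hτ : 0 ≤ τ) :
    sigmaMax (M - τ • M') ≤ sigmaMax M + τ * sigmaMax M' := by
  classical
  simp only [sigmaMax_eq_norm_toEuclideanCLM, map_sub, map_smul]
  refine (norm_sub_le _ _).trans_eq ?_
  rw [norm_smul, Real.norm_of_nonneg hτ]

end SingularValues

section AllAtOnce

variable {m n : Type*} [Fintype m] [Fintype n]

/-- The `k`-th time block of a space-time vector, as an element of Euclidean space. -/
noncomputable def timeBlock (x : m × n → ℝ) (k : m) : EuclideanSpace ℝ n :=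
  WithLp.toLp 2 fun i => x (k, i)

lemma l2norm_sq_eq_sum_timeBlock (x : m × n → ℝ) :
    l2norm x ^ 2 = ∑ k, ‖timeBlock x k‖ ^ 2 := by
  simp [l2norm, timeBlock, EuclideanSpace.norm_sq_eq, Fintype.sum_prod_type,
    Real.sq_sqrt (sum_nonneg fun _ _ => sum_nonneg fun _ _ => sq_nonneg _)]

lemma timeBlock_kronecker_one_mulVec [DecidableEq n] (M : Matrix m m ℝ) (x : m × n → ℝ) (k : m) :
    timeBlock ((M ⊗ₖ (1 : Matrix n n ℝ)) *ᵥ x) k = ∑ j, M k j • timeBlock x j := by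
  ext i
  simp [timeBlock, Matrix.mulVec, dotProduct, Fintype.sum_prod_type, Matrix.one_apply]

lemma timeBlock_one_kronecker_mulVec [DecidableEq m] [DecidableEq n] (A : Matrix n n ℝ)
    (x : m × n → ℝ) (k : m) :
    timeBlock (((1 : Matrix m m ℝ) ⊗ₖ A) *ᵥ x) k = A.toEuclideanLin (timeBlock x k) := by
  ext i
  simp [timeBlock, Matrix.mulVec, dotProduct, Fintype.sum_prod_type, Matrix.one_apply]

lemma sigmaMax_one_kronecker_le [DecidableEq m] (A : Matrix n n ℝ) :
    sigmaMax ((1 : Matrix m m ℝ) ⊗ₖ A) ≤ sigmaMax A := by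
  classical
  refine sigmaMax_le (sigmaMax_nonneg A) fun x => ?_
  refine le_of_sq_le_sq ?_ (mul_nonneg (sigmaMax_nonneg A) (l2norm_nonneg x))
  rw [mul_pow, l2norm_sq_eq_sum_timeBlock, l2norm_sq_eq_sum_timeBlock, mul_sum]
  gcongr with k
  rw [← mul_pow, timeBlock_one_kronecker_mulVec]
  gcongr
  simpa only [timeBlock, Matrix.toLpLin_toLp, Matrix.toLin'_apply, l2norm_eq_norm_toLp]
    using l2norm_mulVec_le A fun i => x (k, i)

variable [DecidableEq n]

lemma sigmaMax_bdf2C_kronecker_one_le (N : ℕ) :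
    sigmaMax (bdf2C N ⊗ₖ (1 : Matrix n n ℝ)) ≤ 4 := by
  refine sigmaMax_le (by norm_num) fun x => ?_
  refine le_of_sq_le_sq ?_ (mul_nonneg (by norm_num) (l2norm_nonneg x))
  rw [mul_pow, l2norm_sq_eq_sum_timeBlock, l2norm_sq_eq_sum_timeBlock]
  simp only [timeBlock_kronecker_one_mulVec]
  exact (sum_sq_norm_sum_bdf2C_smul_le (timeBlock x)).trans_eq (by norm_num)

/-- The BDF2 all-at-once matrix `𝒜 = C ⊗ I - τ (I ⊗ A)` of the system `u' = A u` with `N` time steps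
of size `τ`. -/
noncomputable def bdf2AllAtOnce (N : ℕ) (A : Matrix n n ℝ) (τ : ℝ) :
    Matrix (Fin N × n) (Fin N × n) ℝ :=
  bdf2C N ⊗ₖ (1 : Matrix n n ℝ) - τ • ((1 : Matrix (Fin N) (Fin N) ℝ) ⊗ₖ A)

variable {N : ℕ} {A : Matrix n n ℝ} {τ : ℝ}

lemma sigmaMax_bdf2AllAtOnce_le (hτ : 0 ≤ τ) :
    sigmaMax (bdf2AllAtOnce N A τ) ≤ 4 + τ * sigmaMax A :=
  (sigmaMax_sub_smul_le _ _ hτ).trans <| add_le_add (sigmaMax_bdf2C_kronecker_one_le N) <|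
    mul_le_mul_of_nonneg_left (sigmaMax_one_kronecker_le A) hτ

lemma timeBlock_bdf2AllAtOnce_mulVec (x : Fin N × n → ℝ) (k : Fin N) :
    timeBlock (bdf2AllAtOnce N A τ *ᵥ x) k =
      (∑ j, bdf2C N k j • timeBlock x j) + (τ • -A).toEuclideanLin (timeBlock x k) := by
  have hblock (y z : Fin N × n → ℝ) :
      timeBlock (y - τ • z) k = timeBlock y k - τ • timeBlock z k := rfl
  rw [bdf2AllAtOnce, Matrix.sub_mulVec, Matrix.smul_mulVec, hblock, timeBlock_kronecker_one_mulVec,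
    timeBlock_one_kronecker_mulVec]
  simp [sub_eq_add_neg]

lemma l2norm_sq_le_bdf2AllAtOnce (hA : (-A).PosSemidef) (hτ : 0 ≤ τ) (x : Fin N × n → ℝ) :
    l2norm x ^ 2 ≤ 9 / 8 * (N : ℝ) ^ 2 * l2norm (bdf2AllAtOnce N A τ *ᵥ x) ^ 2 := by
  have hS : (τ • -A).toEuclideanLin.IsPositive :=
    Matrix.isPositive_toEuclideanLin_iff.mpr (hA.smul hτ)
  simp only [l2norm_sq_eq_sum_timeBlock, timeBlock_bdf2AllAtOnce_mulVec]
  exact sum_sq_norm_le_sum_sq_norm_bdf2C_add hS (timeBlock x)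

lemma sqrt_eight_div_le_sigmaMin_bdf2AllAtOnce [Nonempty n] (hN : 1 ≤ N) (hA : (-A).PosSemidef)
    (hτ : 0 ≤ τ) : √8 / (3 * N) ≤ sigmaMin (bdf2AllAtOnce N A τ) := by
  have : Nonempty (Fin N) := Fin.pos_iff_nonempty.mp hN
  have : (0 : ℝ) < N := by exact_mod_cast hN
  refine le_sigmaMin fun x => le_of_sq_le_sq ?_ (l2norm_nonneg _)
  rw [mul_pow, div_pow, Real.sq_sqrt (by norm_num), div_mul_eq_mul_div, div_le_iff₀ (by positivity)]
  linarith [l2norm_sq_le_bdf2AllAtOnce hA hτ x]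

theorem stmt8_general [Nonempty n] (hN : 1 ≤ N) (hAsymm : A.IsSymm)
    (hAnsd : ∀ z : n → ℝ, z ⬝ᵥ (A *ᵥ z) ≤ 0) (hτ : 0 ≤ τ) {T : ℝ} (hT : T = N * τ) :
    sigmaMax (bdf2AllAtOnce N A τ) ≤ 4 + τ * sigmaMax A ∧
      √6 / (3 * N) ≤ sigmaMin (bdf2AllAtOnce N A τ) ∧
      sigmaMax (bdf2AllAtOnce N A τ) / sigmaMin (bdf2AllAtOnce N A τ) ≤
        2 * √6 * N + √6 / 2 * T * sigmaMax A := by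
  have hpsd : (-A).PosSemidef :=
    .of_dotProduct_mulVec_nonneg (by simpa [IsHermitian, IsSymm] using hAsymm) fun z => by
      simpa [Matrix.neg_mulVec] using hAnsd z
  have : (0 : ℝ) < N := by exact_mod_cast hN
  have hσA := sigmaMax_nonneg A
  have hmax := sigmaMax_bdf2AllAtOnce_le (N := N) (A := A) hτ
  have hmin : √6 / (3 * N) ≤ sigmaMin (bdf2AllAtOnce N A τ) :=
    le_trans (by gcongr; norm_num) (sqrt_eight_div_le_sigmaMin_bdf2AllAtOnce hN hpsd hτ)
  refine ⟨hmax, hmin, (div_le_div₀ (by positivity) hmax (by positivity) hmin).trans_eq ?_⟩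
  have h6 : √6 ^ 2 = 6 := Real.sq_sqrt (by norm_num)
  rw [hT]
  field_simp
  rw [h6]
  ring

end AllAtOnce

/-- For `𝒜 = C ⊗ I_{N_s} − τ (I_{N_t} ⊗ A)` with `A` symmetric negative semidefinite and
`T = N_t τ`: `σ_max(𝒜) ≤ 4 + τ‖A‖₂`, `σ_min(𝒜) ≥ √6/(3 N_t)`, and hence
`cond₂(𝒜) = σ_max(𝒜)/σ_min(𝒜) ≤ 2√6 N_t + (√6/2) T ‖A‖₂`. -/
theorem stmt8 (Nt Ns : ℕ) (hNt : 3 ≤ Nt) (hNs : 1 ≤ Ns)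
    (A : Matrix (Fin Ns) (Fin Ns) ℝ) (hAsymm : A.IsSymm)
    (hAnsd : ∀ z : Fin Ns → ℝ, z ⬝ᵥ (A *ᵥ z) ≤ 0)
    (τ : ℝ) (hτ : 0 < τ) (T : ℝ) (hT : T = (Nt : ℝ) * τ) :
    sigmaMax (bdf2C Nt ⊗ₖ (1 : Matrix (Fin Ns) (Fin Ns) ℝ) -
        τ • ((1 : Matrix (Fin Nt) (Fin Nt) ℝ) ⊗ₖ A)) ≤ 4 + τ * sigmaMax A ∧
      Real.sqrt 6 / (3 * (Nt : ℝ)) ≤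
        sigmaMin (bdf2C Nt ⊗ₖ (1 : Matrix (Fin Ns) (Fin Ns) ℝ) -
          τ • ((1 : Matrix (Fin Nt) (Fin Nt) ℝ) ⊗ₖ A)) ∧
      sigmaMax (bdf2C Nt ⊗ₖ (1 : Matrix (Fin Ns) (Fin Ns) ℝ) -
          τ • ((1 : Matrix (Fin Nt) (Fin Nt) ℝ) ⊗ₖ A)) /
        sigmaMin (bdf2C Nt ⊗ₖ (1 : Matrix (Fin Ns) (Fin Ns) ℝ) -
          τ • ((1 : Matrix (Fin Nt) (Fin Nt) ℝ) ⊗ₖ A)) ≤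
        2 * Real.sqrt 6 * (Nt : ℝ) + (Real.sqrt 6 / 2) * T * sigmaMax A := by
  have : Nonempty (Fin Ns) := Fin.pos_iff_nonempty.mp hNs
  exact stmt8_general (by omega) hAsymm hAnsd hτ.le hT
end

section
/- Let γ ∈ (1,2) and for ℓ ∈ ℤ let ω_ℓ^{(γ)} = (−1)^ℓ·Γ(1+γ)/(Γ(1+γ/2−ℓ)·Γ(1+γ/2+ℓ)). Then the family (ω_ℓ^{(γ)})_{ℓ∈ℤ} is absolutely summable, Σ_{ℓ∈ℤ} ω_ℓ^{(γ)} = 0, and consequently ω_0^{(γ)} = Σ_{ℓ≤−1} |ω_ℓ^{(γ)}| + Σ_{ℓ≥1} |ω_ℓ^{(γ)}|. -/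
open Real

/-- The fractional centred difference coefficients
`ω_ℓ^{(γ)} = (−1)^ℓ Γ(1+γ) / (Γ(1+γ/2−ℓ) Γ(1+γ/2+ℓ))`, `ℓ ∈ ℤ`. -/
noncomputable def omegaFCD (γ : ℝ) (l : ℤ) : ℝ :=
  (-1 : ℝ) ^ l * Real.Gamma (1 + γ) /
    (Real.Gamma (1 + γ / 2 - l) * Real.Gamma (1 + γ / 2 + l))

/-
The functional equation of `Γ` turns the coefficients into a sequence with
`(l + 1 + γ/2) ω_{l+1} = (l - γ/2) ω_l`, so that `γ ω_l = t_l - t_{l+1}` with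
`t_l = (l + γ/2) ω_l`. For `l ≥ γ/2` the same recurrence in absolute values shows that
`γ |ω_l| = |t_l| - |t_{l+1}|`, which telescopes to a bounded sum. Absolute summability then forces
`t_l → 0`, since a nonzero limit would make `ω_l` comparable to `1/l`. Hence
`∑_{l ≥ 0} ω_l = t_0 / γ = ω_0 / 2`, and the evenness of `ω` gives the sum over `ℤ`. For
`γ ≤ 2` all factors `l - γ/2` with `l ≥ 1` are nonnegative, so only `ω_0` is positive.
-/

open Filter Topology

theorem eq_zero_of_summable_of_tendsto_mul_nat {f : ℕ → ℝ} {c : ℝ} (hf : Summable f)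
    (hc : Tendsto (fun n : ℕ => f n * n) atTop (𝓝 c)) : c = 0 := by
  by_contra hne
  have hdiv : Tendsto (fun n : ℕ => f n / (1 / (n : ℝ))) atTop (𝓝 c) := by
    simpa only [div_div_eq_mul_div, div_one] using hc
  exact Real.not_summable_one_div_natCast <|
    summable_of_isBigO_nat hf (Asymptotics.isBigO_of_div_tendsto_nhds_of_ne_zero hdiv hne)

-- At the poles of `Γ` the conventions `Γ x = 0` and `0⁻¹ = 0` give the value of the entire
-- function `1/Γ`, so the functional equation persists there.
theorem inv_Gamma_eq_self_mul_inv_Gamma_add_one (x : ℝ) :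
    (Real.Gamma x)⁻¹ = x * (Real.Gamma (x + 1))⁻¹ := by
  rcases eq_or_ne x 0 with rfl | hx
  · rw [Real.Gamma_zero, inv_zero, zero_mul]
  · rw [Real.Gamma_add_one hx, mul_inv, mul_inv_cancel_left₀ hx]

theorem omegaFCD_neg (γ : ℝ) (l : ℤ) : omegaFCD γ (-l) = omegaFCD γ l := by
  have hsign : (-1 : ℝ) ^ (-l) = (-1) ^ l := by rw [zpow_neg, ← inv_zpow, inv_neg_one]
  simp only [omegaFCD, hsign, Int.cast_neg, sub_neg_eq_add, ← sub_eq_add_neg]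
  rw [mul_comm (Real.Gamma (1 + γ / 2 + l))]

theorem omegaFCD_zero_pos {γ : ℝ} (hγ : -1 < γ) : 0 < omegaFCD γ 0 := by
  have hnum : 0 < Real.Gamma (1 + γ) := Real.Gamma_pos_of_pos (by linarith)
  have hden : 0 < Real.Gamma (1 + γ / 2) := Real.Gamma_pos_of_pos (by linarith)
  simp only [omegaFCD, zpow_zero, one_mul, Int.cast_zero, sub_zero, add_zero]
  positivity

theorem omegaFCD_add_one (γ : ℝ) (l : ℤ) :
    (l + 1 + γ / 2) * omegaFCD γ (l + 1) = (l - γ / 2) * omegaFCD γ l := by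
  have hleft := inv_Gamma_eq_self_mul_inv_Gamma_add_one (γ / 2 - l)
  have hright := inv_Gamma_eq_self_mul_inv_Gamma_add_one (1 + γ / 2 + l)
  have e₁ : 1 + γ / 2 - ((l : ℝ) + 1) = γ / 2 - l := by ring
  have e₂ : 1 + γ / 2 + ((l : ℝ) + 1) = 1 + γ / 2 + l + 1 := by ring
  have e₃ : 1 + γ / 2 - (l : ℝ) = γ / 2 - l + 1 := by ring
  have hsign : (-1 : ℝ) ^ (l + 1) = -(-1) ^ l := by
    rw [zpow_add_one₀ (neg_ne_zero.2 one_ne_zero), mul_neg_one]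
  simp only [omegaFCD, Int.cast_add, Int.cast_one, hsign, div_eq_mul_inv _ (_ * _), mul_inv,
    e₁, e₂, e₃]
  rw [hleft, hright]
  ring

theorem sum_range_omegaFCD (γ : ℝ) (N : ℕ) :
    γ * ∑ n ∈ Finset.range N, omegaFCD γ n =
      γ / 2 * omegaFCD γ 0 - (N + γ / 2) * omegaFCD γ N := by
  induction N with
  | zero => simp
  | succ N ih =>
    have hrec := omegaFCD_add_one γ N
    rw [Finset.sum_range_succ, mul_add, ih]
    push_cast at hrec ⊢
    linear_combination hrec

theorem mul_abs_omegaFCD {γ : ℝ} (hγ : 0 ≤ γ) {l : ℤ} (hl : γ / 2 ≤ l) :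
    γ * |omegaFCD γ l| =
      (l + γ / 2) * |omegaFCD γ l| - (l + 1 + γ / 2) * |omegaFCD γ (l + 1)| := by
  have hrec := congrArg abs (omegaFCD_add_one γ l)
  rw [abs_mul, abs_mul, abs_of_nonneg (by linarith : (0 : ℝ) ≤ l + 1 + γ / 2),
    abs_of_nonneg (sub_nonneg.2 hl)] at hrec
  linear_combination hrec

theorem summable_nat_omegaFCD {γ : ℝ} (hγ : 0 < γ) : Summable fun n : ℕ => omegaFCD γ n := by
  obtain ⟨N, hN⟩ := exists_nat_ge (γ / 2)
  let t : ℕ → ℝ := fun k => ((k + N : ℕ) + γ / 2) * |omegaFCD γ (k + N : ℕ)|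
  have hdiff (k : ℕ) : γ * |omegaFCD γ (k + N : ℕ)| = t k - t (k + 1) := by
    have hk : γ / 2 ≤ ((k + N : ℕ) : ℤ) := by
      push_cast
      linarith [k.cast_nonneg (α := ℝ)]
    have hstep := mul_abs_omegaFCD hγ.le hk
    simp only [t, Nat.add_right_comm k 1 N]
    exact_mod_cast hstep
  have hsum (K : ℕ) : ∑ k ∈ Finset.range K, γ * |omegaFCD γ (k + N : ℕ)| ≤ t 0 := by
    rw [Finset.sum_congr rfl fun k _ => hdiff k, Finset.sum_range_sub']
    have : 0 ≤ t K := by positivity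
    linarith
  have htail : Summable fun k : ℕ => γ * |omegaFCD γ (k + N : ℕ)| :=
    summable_of_sum_range_le (fun k => by positivity) hsum
  rw [summable_mul_left_iff hγ.ne'] at htail
  exact ((summable_nat_add_iff (f := fun n : ℕ => |omegaFCD γ n|) N).1 htail).of_abs

theorem hasSum_nat_omegaFCD {γ : ℝ} (hγ : 0 < γ) :
    HasSum (fun n : ℕ => omegaFCD γ n) (omegaFCD γ 0 / 2) := by
  have hs := summable_nat_omegaFCD hγ
  have hlim : Tendsto (fun n : ℕ => omegaFCD γ n * n) atTop
      (𝓝 (γ / 2 * omegaFCD γ 0 - γ * ∑' n : ℕ, omegaFCD γ n)) := by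
    have h := ((hs.tendsto_sum_tsum_nat.const_mul γ).const_sub (γ / 2 * omegaFCD γ 0)).sub
      (hs.tendsto_atTop_zero.const_mul (γ / 2))
    rw [mul_zero, sub_zero] at h
    refine h.congr fun N => ?_
    linear_combination -sum_range_omegaFCD γ N
  have hzero := eq_zero_of_summable_of_tendsto_mul_nat hs hlim
  have htsum : ∑' n : ℕ, omegaFCD γ n = omegaFCD γ 0 / 2 :=
    mul_left_cancel₀ hγ.ne' (by linear_combination -hzero)
  exact htsum ▸ hs.hasSum

theorem hasSum_nat_add_one_omegaFCD {γ : ℝ} (hγ : 0 < γ) :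
    HasSum (fun n : ℕ => omegaFCD γ (n + 1)) (-(omegaFCD γ 0 / 2)) := by
  have h := (hasSum_nat_add_iff' 1).2 (hasSum_nat_omegaFCD hγ)
  rw [Finset.sum_range_one, Nat.cast_zero, half_sub] at h
  exact_mod_cast h

theorem hasSum_int_omegaFCD {γ : ℝ} (hγ : 0 < γ) : HasSum (omegaFCD γ) 0 := by
  have hpos := hasSum_nat_add_one_omegaFCD hγ
  have hneg : HasSum (fun n : ℕ => omegaFCD γ (-(n + 1))) (-(omegaFCD γ 0 / 2)) := by
    simpa only [omegaFCD_neg] using hpos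
  convert hpos.of_add_one_of_neg_add_one hneg using 1
  ring

theorem omegaFCD_nat_add_one_nonpos {γ : ℝ} (hγ₀ : 0 ≤ γ) (hγ₂ : γ ≤ 2) (n : ℕ) :
    omegaFCD γ (n + 1) ≤ 0 := by
  have hrec := omegaFCD_add_one γ n
  have hpos : (0 : ℝ) < (n : ℤ) + 1 + γ / 2 := by positivity
  refine nonpos_of_mul_nonpos_right (hrec.trans_le ?_) hpos
  cases n with
  | zero =>
    have h₀ : 0 ≤ omegaFCD γ 0 := (omegaFCD_zero_pos (by linarith)).le
    exact mul_nonpos_of_nonpos_of_nonneg (by push_cast; linarith) h₀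
  | succ n =>
    have ih := omegaFCD_nat_add_one_nonpos hγ₀ hγ₂ n
    have hcoeff : (0 : ℝ) ≤ ((n + 1 : ℕ) : ℤ) - γ / 2 := by
      push_cast
      linarith [n.cast_nonneg (α := ℝ)]
    exact mul_nonpos_of_nonneg_of_nonpos hcoeff (by exact_mod_cast ih)

theorem hasSum_abs_nat_add_one_omegaFCD {γ : ℝ} (hγ₀ : 0 < γ) (hγ₂ : γ ≤ 2) :
    HasSum (fun n : ℕ => |omegaFCD γ (n + 1)|) (omegaFCD γ 0 / 2) := by
  simpa only [abs_of_nonpos (omegaFCD_nat_add_one_nonpos hγ₀.le hγ₂ _), neg_neg] using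
    (hasSum_nat_add_one_omegaFCD hγ₀).neg

theorem stmt18_general (γ : ℝ) (hγ : γ ∈ Set.Ioo (0 : ℝ) 2) :
    Summable (fun l : ℤ => |omegaFCD γ l|) ∧
      (∑' l : ℤ, omegaFCD γ l) = 0 ∧
      omegaFCD γ 0 =
        (∑' n : ℕ, |omegaFCD γ (-(n + 1) : ℤ)|) + ∑' n : ℕ, |omegaFCD γ ((n + 1) : ℤ)| := by
  have hsum := hasSum_int_omegaFCD hγ.1
  refine ⟨hsum.summable.abs, hsum.tsum_eq, ?_⟩
  simp only [omegaFCD_neg]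
  rw [(hasSum_abs_nat_add_one_omegaFCD hγ.1 hγ.2.le).tsum_eq, add_halves]

/-- For `γ ∈ (1,2)`, the family `(ω_ℓ^{(γ)})_{ℓ∈ℤ}` is absolutely summable, its sum over
`ℤ` is zero, and consequently `ω_0^{(γ)} = Σ_{ℓ≤−1} |ω_ℓ^{(γ)}| + Σ_{ℓ≥1} |ω_ℓ^{(γ)}|`
(the two one-sided tails being indexed here by `ℓ = −(n+1)` and `ℓ = n+1`, `n ∈ ℕ`). -/
theorem stmt18 (γ : ℝ) (hγ : γ ∈ Set.Ioo (1 : ℝ) 2) :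
    Summable (fun l : ℤ => |omegaFCD γ l|) ∧
      (∑' l : ℤ, omegaFCD γ l) = 0 ∧
      omegaFCD γ 0 =
        (∑' n : ℕ, |omegaFCD γ (-(n + 1) : ℤ)|) + ∑' n : ℕ, |omegaFCD γ ((n + 1) : ℤ)| :=
  stmt18_general γ ⟨one_pos.trans hγ.1, hγ.2⟩
end
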